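/- $\sum_{n\geq 0} \frac{\binom{2n}{n}}{(2n+1)^2 (-16)^n}\left(5 \sum_{j=0}^{n-1} \frac{1}{(2j+1)^4} + \frac{1}{(2n+1)^4}\right) = \frac{7\pi^6}{7200}$. -/

import Mathlib

open Filter Topology

/-!
Put `m = n + 1/2` and let `B` be the beta function. For small `t`, the products
`∏_{j<n} ((j+1/2)⁴ + 4t) · ∏_{j<k} ((j+1)⁴ - t) / ∏_{j≤n+k} ((j+1/2)⁴ - t)`, weighted by
`(-16)⁻ⁿ C(2n,n)` and by a quadratic form in `k` and `m`, are the second entry of a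
Wilf–Zeilberger pair. The telescoping works because of Sophie Germain's factorization of
`4s⁴ + m⁴`. Differentiating at `t = 0` replaces the products by `B(m, k+1)⁴` times their logarithmic
derivative, which is a combination of partial sums of `∑ 1/(j+1/2)⁴` and `∑ 1/(j+1)⁴`.

Hence the sum over `n` does not depend on `k`. At `k = 0` it is a multiple of the required series;
as `k → ∞` only the term `n = 0` survives, because `B(m, k+1) ~ Γ(m) k⁻ᵐ`, and its limit is
`2 · Γ(1/2)⁴ · (π⁴/6 - π⁴/90)`.
-/

section

open ProbabilityTheory Finset Real

theorem hasSum_of_wilfZeilberger {E : Type*} [NormedAddCommGroup E] [CompleteSpace E]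
    {F G : ℕ → ℕ → E} {L : ℕ → E} {bound : ℕ → ℝ}
    (hFG : ∀ n k, F (n + 1) k - F n k = G n (k + 1) - G n k) (hF_zero : ∀ k, F 0 k = 0)
    (hF : ∀ k, Tendsto (F · k) atTop (𝓝 0)) (h_bound : Summable bound)
    (hG : ∀ n k, ‖G n k‖ ≤ bound n) (hL : ∀ n, Tendsto (G n) atTop (𝓝 (L n))) :
    HasSum (G · 0) (∑' n, L n) := by
  have hG_summable (k : ℕ) : Summable (G · k) := .of_norm_bounded h_bound (hG · k)
  have tsum_succ (k : ℕ) : ∑' n, G n (k + 1) = ∑' n, G n k := by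
    have h_diff := ((hG_summable (k + 1)).hasSum.sub (hG_summable k).hasSum).tendsto_sum_nat
    simp only [← hFG, sum_range_sub (F · k), hF_zero, sub_zero] at h_diff
    exact sub_eq_zero.1 (tendsto_nhds_unique h_diff (hF k))
  have tsum_const (k : ℕ) : ∑' n, G n k = ∑' n, G n 0 := by
    induction k with
    | zero => rfl
    | succ k ih => rw [tsum_succ, ih]
  have h_lim : Tendsto (fun k ↦ ∑' n, G n k) atTop (𝓝 (∑' n, L n)) :=
    tendsto_tsum_of_dominated_convergence h_bound hL (.of_forall fun k n ↦ hG n k)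
  simp only [tsum_const] at h_lim
  exact tendsto_nhds_unique tendsto_const_nhds h_lim ▸ (hG_summable 0).hasSum

theorem beta_add_one_left {x y : ℝ} (hx : x ≠ 0) (hxy : x + y ≠ 0) :
    beta (x + 1) y = x / (x + y) * beta x y := by
  rw [beta, beta, add_right_comm, Gamma_add_one hx, Gamma_add_one hxy,
    div_mul_div_comm, mul_assoc]

theorem beta_add_one_right {x y : ℝ} (hy : y ≠ 0) (hxy : x + y ≠ 0) :
    beta x (y + 1) = y / (x + y) * beta x y := by
  rw [beta, beta, ← add_assoc, Gamma_add_one hy, Gamma_add_one hxy, div_mul_div_comm,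
    mul_left_comm]

theorem beta_one_right {x : ℝ} (hx : 0 < x) : beta x 1 = 1 / x := by
  have hΓ : Gamma x ≠ 0 := (Gamma_pos_of_pos hx).ne'
  rw [beta, Gamma_one, Gamma_add_one hx.ne']
  field_simp

theorem rpow_mul_beta_eq_GammaSeq {x : ℝ} (hx : 0 < x) (k : ℕ) :
    (k : ℝ) ^ x * beta x (k + 1) = GammaSeq x k := by
  have h_prod : beta x (k + 1) = k.factorial / ∏ j ∈ range (k + 1), (x + j) := by
    induction k with
    | zero => simp [beta_one_right hx]
    | succ k ih =>
      push_cast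
      rw [beta_add_one_right (by positivity) (by positivity), ih, prod_range_succ _ (k + 1),
        Nat.factorial_succ]
      push_cast
      rw [div_mul_div_comm, mul_comm (x + _)]
  rw [h_prod, GammaSeq, mul_div_assoc]

theorem mul_beta_le_one {x : ℝ} (hx : 0 < x) (k : ℕ) : x * beta x (k + 1) ≤ 1 := by
  induction k with
  | zero => simp [beta_one_right hx, hx.ne']
  | succ k ih =>
    have hβ : 0 < beta x (k + 1) := beta_pos hx (by positivity)
    push_cast
    rw [beta_add_one_right (by positivity) (by positivity), mul_left_comm]
    exact mul_le_one₀ ((div_le_one (by positivity)).2 (by linarith)) (by positivity) ih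

theorem mul_beta_sq_le_four {x : ℝ} (hx : 1 / 2 ≤ x) (k : ℕ) :
    (k + 1) * beta x (k + 1) ^ 2 ≤ 4 := by
  have hx_pos : 0 < x := by linarith
  induction k with
  | zero =>
    have h_inv : 1 / x ≤ 2 := by rw [div_le_iff₀ hx_pos]; linarith
    simp only [Nat.cast_zero, zero_add, one_mul, beta_one_right hx_pos]
    calc (1 / x) ^ 2 ≤ 2 ^ 2 := by gcongr
      _ = 4 := by norm_num
  | succ k ih =>
    have h_ratio : ((k : ℝ) + 1 + 1) * ((k + 1) / (x + (k + 1))) ^ 2 ≤ k + 1 := by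
      rw [div_pow, ← mul_div_assoc, div_le_iff₀ (by positivity)]
      have : ((k : ℝ) + 1) * (k + 2) ≤ (x + (k + 1)) ^ 2 := by nlinarith
      nlinarith
    push_cast
    rw [beta_add_one_right (by positivity) (by positivity), mul_pow, ← mul_assoc]
    exact (mul_le_mul_of_nonneg_right h_ratio (sq_nonneg _)).trans ih

theorem beta_le_two {x : ℝ} (hx : 1 / 2 ≤ x) (k : ℕ) : beta x (k + 1) ≤ 2 := by
  have hβ : 0 < beta x (k + 1) := beta_pos (by linarith) (by positivity)
  nlinarith [mul_beta_le_one (by linarith : 0 < x) k]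

theorem sq_mul_beta_pow_four_eq {x : ℝ} (hx : 0 < x) {k : ℕ} (hk : k ≠ 0) :
    (k : ℝ) ^ 2 * beta x (k + 1) ^ 4 = (k : ℝ) ^ (2 - 4 * x) * GammaSeq x k ^ 4 := by
  have hk_pos : (0 : ℝ) < k := by positivity
  have h_rpow : (k : ℝ) ^ (2 - 4 * x) * ((k : ℝ) ^ x) ^ 4 = (k : ℝ) ^ 2 := by
    rw [← rpow_mul_natCast hk_pos.le, ← rpow_add hk_pos, ← rpow_natCast]
    congr 1
    push_cast
    ring
  rw [← rpow_mul_beta_eq_GammaSeq hx, mul_pow, ← mul_assoc, h_rpow]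

theorem tendsto_sq_mul_beta_half_pow_four :
    Tendsto (fun k : ℕ ↦ (k : ℝ) ^ 2 * beta (1 / 2) (k + 1) ^ 4) atTop (𝓝 (π ^ 2)) := by
  have h_lim := (GammaSeq_tendsto_Gamma (1 / 2)).pow 4
  have h_val : Gamma (1 / 2) ^ 4 = π ^ 2 := by
    rw [Gamma_one_half_eq, show 4 = 2 * 2 from rfl, pow_mul, sq_sqrt pi_pos.le]
  rw [h_val] at h_lim
  refine h_lim.congr' ?_
  filter_upwards [eventually_ne_atTop 0] with k hk
  rw [sq_mul_beta_pow_four_eq (by norm_num) hk]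
  norm_num

theorem tendsto_sq_mul_beta_pow_four_zero {x : ℝ} (hx : 1 / 2 < x) :
    Tendsto (fun k : ℕ ↦ (k : ℝ) ^ 2 * beta x (k + 1) ^ 4) atTop (𝓝 0) := by
  have h_rpow : Tendsto (fun k : ℕ ↦ (k : ℝ) ^ (2 - 4 * x)) atTop (𝓝 0) := by
    simpa only [neg_sub] using! (tendsto_rpow_neg_atTop (by linarith : 0 < 4 * x - 2)).comp
      (tendsto_natCast_atTop_atTop (R := ℝ))
  have h_lim := h_rpow.mul ((GammaSeq_tendsto_Gamma x).pow 4)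
  rw [zero_mul] at h_lim
  refine h_lim.congr' ?_
  filter_upwards [eventually_ne_atTop 0] with k hk
  rw [sq_mul_beta_pow_four_eq (by linarith) hk]

theorem tendsto_sum_sq_mul_of_tendsto_sq_mul {f : ℕ → ℝ} {L : ℝ} (x y : ℝ)
    (hf : Tendsto (fun k : ℕ ↦ (k : ℝ) ^ 2 * f k) atTop (𝓝 L)) :
    Tendsto (fun k : ℕ ↦ (((k : ℝ) + x) ^ 2 + (k + y) ^ 2) * f k) atTop (𝓝 (2 * L)) := by
  have h_inv (z : ℝ) := (tendsto_const_div_atTop_nhds_zero_nat z).const_add 1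
  have h_lim := (((h_inv x).pow 2).add ((h_inv y).pow 2)).mul hf
  rw [show ((1 + 0) ^ 2 + (1 + 0) ^ 2) * L = 2 * L by ring] at h_lim
  refine h_lim.congr' ?_
  filter_upwards [eventually_ne_atTop 0] with k hk
  field_simp

theorem hasSum_one_div_add_half_pow {s : ℕ} {Z : ℝ}
    (h : HasSum (fun n : ℕ ↦ 1 / (n : ℝ) ^ s) Z) :
    HasSum (fun j : ℕ ↦ 1 / ((j : ℝ) + 1 / 2) ^ s) ((2 ^ s - 1) * Z) := by
  have h_even : HasSum (fun j : ℕ ↦ 1 / ((2 * j : ℕ) : ℝ) ^ s) (1 / 2 ^ s * Z) := by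
    refine (h.mul_left (1 / 2 ^ s)).congr_fun fun j ↦ ?_
    rw [Nat.cast_mul, Nat.cast_ofNat, one_div_mul_one_div, mul_pow]
  have h_odd : Summable (fun j : ℕ ↦ 1 / ((2 * j + 1 : ℕ) : ℝ) ^ s) :=
    h.summable.comp_injective (i := fun j ↦ 2 * j + 1) fun a b hab ↦ by simpa using hab
  have h_odd_tsum := (HasSum.even_add_odd (f := fun n : ℕ ↦ 1 / (n : ℝ) ^ s)
    h_even h_odd.hasSum).unique h
  have h_value : 2 ^ s * ∑' j : ℕ, 1 / ((2 * j + 1 : ℕ) : ℝ) ^ s = (2 ^ s - 1) * Z := by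
    rw [eq_sub_of_add_eq' h_odd_tsum]
    field_simp
  rw [← h_value]
  refine (h_odd.hasSum.mul_left (2 ^ s)).congr_fun fun j ↦ ?_
  rw [show ((2 * j + 1 : ℕ) : ℝ) = 2 * (j + 1 / 2) by push_cast; ring, mul_pow]
  field_simp

/-- The partial sum of the series for the Hurwitz zeta value `ζ(s, x)`; harmonic numbers of order
`s` are the case `x = 1`. -/
noncomputable def hurwitzSum (s : ℕ) (x : ℝ) (n : ℕ) : ℝ :=
  ∑ j ∈ range n, 1 / ((j : ℝ) + x) ^ s

theorem hurwitzSum_succ (s : ℕ) (x : ℝ) (n : ℕ) :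
    hurwitzSum s x (n + 1) = hurwitzSum s x n + 1 / (n + x) ^ s :=
  sum_range_succ _ n

theorem tendsto_hurwitzSum_four_one : Tendsto (hurwitzSum 4 1) atTop (𝓝 (π ^ 4 / 90)) := by
  have h := (hasSum_nat_add_iff' (f := fun n : ℕ ↦ 1 / (n : ℝ) ^ 4) 1).2 hasSum_zeta_four
  simpa only [Nat.cast_add, Nat.cast_one, sum_range_one, Nat.cast_zero, ne_eq, OfNat.ofNat_ne_zero,
    not_false_eq_true, zero_pow, div_zero, sub_zero] using! h.tendsto_sum_nat

theorem tendsto_hurwitzSum_four_half : Tendsto (hurwitzSum 4 (1 / 2)) atTop (𝓝 (π ^ 4 / 6)) := by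
  have h := (hasSum_one_div_add_half_pow hasSum_zeta_four).tendsto_sum_nat
  rwa [show ((2 : ℝ) ^ 4 - 1) * (π ^ 4 / 90) = π ^ 4 / 6 by ring] at h

theorem hurwitzSum_nonneg {x : ℝ} (hx : 0 ≤ x) (s n : ℕ) : 0 ≤ hurwitzSum s x n :=
  sum_nonneg fun _ _ ↦ by positivity

theorem hurwitzSum_le_of_tendsto {s : ℕ} {x Z : ℝ} (hx : 0 ≤ x)
    (h : Tendsto (hurwitzSum s x) atTop (𝓝 Z)) (n : ℕ) : hurwitzSum s x n ≤ Z := by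
  refine Monotone.ge_of_tendsto (monotone_nat_of_le_succ fun n ↦ ?_) h n
  rw [hurwitzSum_succ]
  exact le_add_of_nonneg_right (by positivity)

/-- The logarithmic derivative at `t = 0` of
`∏_{j<n} ((j+1/2)⁴ + 4t) · ∏_{j<k} ((j+1)⁴ - t) / ∏_{j≤n+k} ((j+1/2)⁴ - t)`. -/
noncomputable def quarticLogDeriv (n k : ℕ) : ℝ :=
  4 * hurwitzSum 4 (1 / 2) n - hurwitzSum 4 1 k + hurwitzSum 4 (1 / 2) (n + k + 1)

theorem quarticLogDeriv_succ_left (n k : ℕ) :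
    quarticLogDeriv (n + 1) k =
      quarticLogDeriv n k + 4 / (n + 1 / 2) ^ 4 + 1 / (n + 1 / 2 + (k + 1)) ^ 4 := by
  rw [quarticLogDeriv, quarticLogDeriv, show n + 1 + k + 1 = n + k + 1 + 1 by ring,
    hurwitzSum_succ, hurwitzSum_succ _ _ (n + k + 1)]
  push_cast
  ring

theorem quarticLogDeriv_succ_right (n k : ℕ) :
    quarticLogDeriv n (k + 1) =
      quarticLogDeriv n k - 1 / (k + 1) ^ 4 + 1 / (n + 1 / 2 + (k + 1)) ^ 4 := by
  rw [quarticLogDeriv, quarticLogDeriv, ← add_assoc n, hurwitzSum_succ,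
    hurwitzSum_succ _ _ (n + k + 1)]
  push_cast
  ring

theorem abs_quarticLogDeriv_le (n k : ℕ) : |quarticLogDeriv n k| ≤ π ^ 4 := by
  have half_nonneg := hurwitzSum_nonneg (x := 1 / 2) (by norm_num) 4
  have half_le := hurwitzSum_le_of_tendsto (by norm_num) tendsto_hurwitzSum_four_half
  have one_nonneg := hurwitzSum_nonneg zero_le_one 4
  have one_le := hurwitzSum_le_of_tendsto zero_le_one tendsto_hurwitzSum_four_one
  rw [quarticLogDeriv, abs_le]
  constructor <;>
    linarith [half_nonneg n, half_le n, half_nonneg (n + k + 1), half_le (n + k + 1),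
      one_nonneg k, one_le k]

theorem tendsto_quarticLogDeriv (n : ℕ) :
    Tendsto (quarticLogDeriv n) atTop
      (𝓝 (4 * hurwitzSum 4 (1 / 2) n - π ^ 4 / 90 + π ^ 4 / 6)) := by
  have h_shift : Tendsto (fun k ↦ n + k + 1) atTop atTop :=
    tendsto_atTop_mono (fun k ↦ (by lia : k ≤ n + k + 1)) tendsto_id
  exact (tendsto_hurwitzSum_four_one.const_sub _).add (tendsto_hurwitzSum_four_half.comp h_shift)

/-- The coefficient `binom(2n, n) / (-16)ⁿ` of the series. -/
noncomputable def altCentralBinom (n : ℕ) : ℝ :=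
  n.centralBinom / (-16) ^ n

theorem altCentralBinom_succ (n : ℕ) :
    4 * (n + 1) * altCentralBinom (n + 1) = -(n + 1 / 2) * altCentralBinom n := by
  have h_rec : ((n : ℝ) + 1) * (n + 1).centralBinom = 2 * (2 * n + 1) * n.centralBinom := by
    exact_mod_cast n.succ_mul_centralBinom_succ
  rw [altCentralBinom, altCentralBinom, pow_succ]
  field_simp
  linear_combination -8 * h_rec

theorem abs_altCentralBinom_le (n : ℕ) : |altCentralBinom n| ≤ (1 / 4) ^ n := by
  have h_le : (n.centralBinom : ℝ) ≤ 4 ^ n := by exact_mod_cast n.centralBinom_le_four_pow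
  calc |altCentralBinom n| = n.centralBinom / 16 ^ n := by simp [altCentralBinom, abs_div]
    _ ≤ 4 ^ n / 16 ^ n := by gcongr
    _ = (1 / 4) ^ n := by rw [← div_pow]; norm_num

/-- The second entry `G` of the Wilf–Zeilberger pair `F (n+1) k - F n k = G n (k+1) - G n k`. At
`k = 0` it is `320` times the summand of the series. -/
noncomputable def wzSummand (n k : ℕ) : ℝ :=
  altCentralBinom n *
    (((k + (n + 1 / 2)) ^ 2 + (k + 2 * (n + 1 / 2)) ^ 2) * beta (n + 1 / 2) (k + 1) ^ 4 *
      quarticLogDeriv n k)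

/-- The first entry `F` of the Wilf–Zeilberger pair `F (n+1) k - F n k = G n (k+1) - G n k`. -/
noncomputable def wzMate (n k : ℕ) : ℝ :=
  altCentralBinom n *
    (4 * n * (n + 1 / 2 + 1 + 2 * k) * beta (n + 1 / 2) (k + 1) ^ 4 * quarticLogDeriv n k)

/-- The Wilf–Zeilberger equation after division by `altCentralBinom n * beta m l ^ 4`, with
`m = n + 1/2`, `l = k + 1` and `h = quarticLogDeriv n k`. -/
theorem wz_rational_identity {K : Type*} [Field K] {m l : K} (hm : m ≠ 0) (hl : l ≠ 0)
    (hml : m + l ≠ 0) (h : K) :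
    -m * (m + 2 * l) * (m / (m + l)) ^ 4 * (h + 4 / m ^ 4 + 1 / (m + l) ^ 4) -
        (4 * m - 2) * (m + 2 * l - 1) * h =
      ((l + m) ^ 2 + (l + 2 * m) ^ 2) * (l / (m + l)) ^ 4 * (h - 1 / l ^ 4 + 1 / (m + l) ^ 4) -
        ((l - 1 + m) ^ 2 + (l - 1 + 2 * m) ^ 2) * h := by
  have h_coeff : m ^ 5 * (m + 2 * l) + ((l + m) ^ 2 + (l + 2 * m) ^ 2) * l ^ 4 =
      (l ^ 2 + (l - m) ^ 2) * (m + l) ^ 4 := by ring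
  -- With `s = m + l`, both sides equal `m(m + 2l)(s² + l²)((l + m)² + (l + 2m)²)`.
  have sophie_germain : m * (m + 2 * l) * (4 * (m + l) ^ 4 + m ^ 4) =
      ((l + m) ^ 2 + (l + 2 * m) ^ 2) * ((m + l) ^ 4 - l ^ 4) := by ring
  field_simp
  linear_combination -h * (m + l) ^ 4 * h_coeff - sophie_germain

theorem wzMate_succ_sub (n k : ℕ) :
    wzMate (n + 1) k - wzMate n k = wzSummand n (k + 1) - wzSummand n k := by
  have h_rec := altCentralBinom_succ n
  have h_rat := wz_rational_identity (m := (n : ℝ) + 1 / 2) (l := k + 1) (by positivity)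
    (by positivity) (by positivity) (quarticLogDeriv n k)
  have h_left : beta (((n + 1 : ℕ) : ℝ) + 1 / 2) (k + 1) =
      (n + 1 / 2) / (n + 1 / 2 + (k + 1)) * beta (n + 1 / 2) (k + 1) := by
    rw [← beta_add_one_left (by positivity) (by positivity), Nat.cast_succ, add_right_comm]
  have h_right : beta ((n : ℝ) + 1 / 2) (((k + 1 : ℕ) : ℝ) + 1) =
      (k + 1) / (n + 1 / 2 + (k + 1)) * beta (n + 1 / 2) (k + 1) := by
    rw [Nat.cast_succ, beta_add_one_right (by positivity) (by positivity)]
  rw [wzMate, wzMate, wzSummand, wzSummand, h_left, h_right, quarticLogDeriv_succ_left,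
    quarticLogDeriv_succ_right, mul_pow, mul_pow]
  generalize beta ((n : ℝ) + 1 / 2) (k + 1) = b, quarticLogDeriv n k = h at *
  generalize ((n : ℝ) + 1 / 2) / (n + 1 / 2 + (k + 1)) = u,
    ((k : ℝ) + 1) / (n + 1 / 2 + (k + 1)) = v at *
  generalize 1 / ((n : ℝ) + 1 / 2 + (k + 1)) ^ 4 = w at *
  push_cast
  linear_combination altCentralBinom n * b ^ 4 * h_rat +
    (n + 1 + 1 / 2 + 1 + 2 * k) * u ^ 4 * b ^ 4 * (h + 4 / (n + 1 / 2) ^ 4 + w) * h_rec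

theorem sum_sq_mul_beta_pow_four_le {x : ℝ} (hx : 1 / 2 ≤ x) (k : ℕ) :
    ((k + x) ^ 2 + (k + 2 * x) ^ 2) * beta x (k + 1) ^ 4 ≤ 100 := by
  have hx_pos : 0 < x := by linarith
  have h_beta := beta_le_two hx k
  have h_mul := mul_beta_le_one hx_pos k
  have h_sq : k * beta x (k + 1) ^ 2 ≤ 4 := by nlinarith [mul_beta_sq_le_four hx k]
  have h_pos : 0 < beta x (k + 1) := beta_pos hx_pos (by positivity)
  generalize beta x (k + 1) = b at *
  calc ((k + x) ^ 2 + (k + 2 * x) ^ 2) * b ^ 4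
      = 2 * (k * b ^ 2) ^ 2 + 6 * (k * b ^ 2) * (x * b) * b + 5 * (x * b) ^ 2 * b ^ 2 := by ring
    _ ≤ 2 * 4 ^ 2 + 6 * 4 * 1 * 2 + 5 * 1 ^ 2 * 2 ^ 2 := by gcongr
    _ = 100 := by norm_num

theorem mul_linear_mul_beta_pow_four_le {x : ℝ} (hx : 1 / 2 ≤ x) (k : ℕ) :
    4 * x * (x + 1 + 2 * k) * beta x (k + 1) ^ 4 ≤ 112 := by
  have hx_pos : 0 < x := by linarith
  have h_beta := beta_le_two hx k
  have h_mul := mul_beta_le_one hx_pos k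
  have h_sq : k * beta x (k + 1) ^ 2 ≤ 4 := by nlinarith [mul_beta_sq_le_four hx k]
  have h_pos : 0 < beta x (k + 1) := beta_pos hx_pos (by positivity)
  generalize beta x (k + 1) = b at *
  calc 4 * x * (x + 1 + 2 * k) * b ^ 4
      = 4 * ((x * b) ^ 2 * b ^ 2 + (x * b) * b ^ 3 + 2 * (x * b) * b * (k * b ^ 2)) := by ring
    _ ≤ 4 * (1 ^ 2 * 2 ^ 2 + 1 * 2 ^ 3 + 2 * 1 * 2 * 4) := by gcongr
    _ = 112 := by norm_num

theorem abs_wzSummand_le (n k : ℕ) : |wzSummand n k| ≤ (1 / 4) ^ n * (100 * π ^ 4) := by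
  rw [wzSummand, abs_mul, abs_mul, abs_of_nonneg (a := _ * beta _ _ ^ 4) (by positivity)]
  gcongr
  · exact abs_altCentralBinom_le n
  · exact sum_sq_mul_beta_pow_four_le (by linarith [n.cast_nonneg (α := ℝ)]) k
  · exact abs_quarticLogDeriv_le n k

theorem abs_wzMate_le (n k : ℕ) : |wzMate n k| ≤ (1 / 4) ^ n * (112 * π ^ 4) := by
  rw [wzMate, abs_mul, abs_mul, abs_of_nonneg (a := _ * beta _ _ ^ 4) (by positivity)]
  gcongr
  · exact abs_altCentralBinom_le n
  · refine le_trans ?_ (mul_linear_mul_beta_pow_four_le (x := n + 1 / 2) (by simp) k)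
    gcongr
    simp
  · exact abs_quarticLogDeriv_le n k

theorem tendsto_wzMate (k : ℕ) : Tendsto (wzMate · k) atTop (𝓝 0) :=
  squeeze_zero_norm (abs_wzMate_le · k)
    ((summable_geometric_of_lt_one (by norm_num) (by norm_num)).mul_right _).tendsto_atTop_zero

theorem tendsto_wzSummand (n : ℕ) :
    Tendsto (wzSummand n) atTop (𝓝 (if n = 0 then 14 * π ^ 6 / 45 else 0)) := by
  have tendsto_of_beta {L : ℝ}
      (hL : Tendsto (fun k : ℕ ↦ (k : ℝ) ^ 2 * beta (n + 1 / 2) (k + 1) ^ 4) atTop (𝓝 L)) :=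
    ((tendsto_sum_sq_mul_of_tendsto_sq_mul (n + 1 / 2) (2 * (n + 1 / 2)) hL).mul
      (tendsto_quarticLogDeriv n)).const_mul (altCentralBinom n)
  split_ifs with hn
  · subst hn
    convert! tendsto_of_beta (by simpa using tendsto_sq_mul_beta_half_pow_four) using 2
    simp only [altCentralBinom, Nat.centralBinom_zero, hurwitzSum, sum_range_zero]
    push_cast
    ring
  · have h_half_lt : (1 / 2 : ℝ) < n + 1 / 2 := by simpa using Nat.pos_of_ne_zero hn
    simpa only [mul_zero, zero_mul] using!
      tendsto_of_beta (tendsto_sq_mul_beta_pow_four_zero h_half_lt)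

theorem hasSum_wzSummand_zero : HasSum (wzSummand · 0) (14 * π ^ 6 / 45) := by
  have h := hasSum_of_wilfZeilberger wzMate_succ_sub (by simp [wzMate]) tendsto_wzMate
    ((summable_geometric_of_lt_one (by norm_num) (by norm_num)).mul_right _) abs_wzSummand_le
    tendsto_wzSummand
  rwa [tsum_ite_eq] at h

theorem hurwitzSum_half (s n : ℕ) :
    hurwitzSum s (1 / 2) n = 2 ^ s * ∑ j ∈ range n, 1 / (2 * (j : ℝ) + 1) ^ s := by
  rw [hurwitzSum, mul_sum]
  refine sum_congr rfl fun j _ ↦ ?_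
  rw [show 2 * (j : ℝ) + 1 = 2 * (j + 1 / 2) by ring, mul_pow]
  field_simp

theorem wzSummand_zero_right (n : ℕ) :
    wzSummand n 0 = 320 * (((2 * n).choose n : ℝ) / ((2 * (n : ℝ) + 1) ^ 2 * (-16) ^ n) *
      (5 * (∑ j ∈ range n, 1 / (2 * (j : ℝ) + 1) ^ 4) + 1 / (2 * (n : ℝ) + 1) ^ 4)) := by
  have h_beta : beta (n + 1 / 2) ((0 : ℕ) + 1) = 1 / (n + 1 / 2) := by
    rw [Nat.cast_zero, zero_add, beta_one_right (by positivity)]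
  have h_logDeriv : quarticLogDeriv n 0 =
      5 * hurwitzSum 4 (1 / 2) n + 1 / (n + 1 / 2) ^ 4 := by
    rw [quarticLogDeriv, add_zero, hurwitzSum_succ, hurwitzSum, hurwitzSum, sum_range_zero]
    ring
  rw [wzSummand, h_beta, h_logDeriv, hurwitzSum_half, altCentralBinom,
    Nat.centralBinom_eq_two_mul_choose, show 2 * (n : ℝ) + 1 = 2 * (n + 1 / 2) by ring]
  push_cast
  field_simp
  ring

end

theorem stmt_5 :
    Tendsto (fun N => ∑ n ∈ Finset.range N,
      ((2*n).choose n : ℝ) / ((2*(n:ℝ)+1)^2 * (-16)^n) *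
        (5 * (∑ j ∈ Finset.range n, 1 / (2*(j:ℝ)+1)^4) + 1 / (2*(n:ℝ)+1)^4))
      atTop (𝓝 (7 * Real.pi^6 / 7200)) := by
  have h := (hasSum_wzSummand_zero.div_const 320).tendsto_sum_nat
  simp only [wzSummand_zero_right, mul_div_cancel_left₀ _ (by norm_num : (320 : ℝ) ≠ 0)] at h
  rwa [show 14 * Real.pi ^ 6 / 45 / 320 = 7 * Real.pi ^ 6 / 7200 by ring] at h
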